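/- arXiv:1905.01028 — 2 statements merged into one kernel-verified Lean document; each statement's English description precedes it below -/
import Mathlib

section
/- Let G be a connected undirected graph on n vertices with Laplacian matrix L, let B = diag(b_1, ..., b_n) be a diagonal positive semi-definite real matrix with at least one positive diagonal entry, and let C₁, C₂ ∈ ℝ^{m×m} be positive definite diagonal matrices. Then the matrix L ⊗ C₁ + B ⊗ C₂ ∈ ℝ^{nm×nm} is positive definite, where ⊗ denotes the Kronecker product. -/
/-!
Since `C₁` and `C₂` are diagonal, the quadratic form of `L ⊗ C₁ + B ⊗ C₂` at `x` splits as the sum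
over `j` of the forms of `c₁ j • L + c₂ j • B` at the slices `i ↦ x (i, j)`. It therefore suffices
that `s • L + t • B` is positive definite for `s, t > 0`. Both summands are positive semidefinite,
so a vector on which the form vanishes is annihilated by each. As `G` is connected, vanishing of
the Laplacian form makes the vector constant, and the coordinate where `b` is positive makes that
constant zero.
-/

open Matrix Kronecker

/-- The case `m = 1`. -/
theorem smul_lap_add_smul_diagonal_posDef {n : ℕ} (G : SimpleGraph (Fin n))
    [DecidableRel G.Adj] (hG : G.Connected)
    (b : Fin n → ℝ) (hb : ∀ i, 0 ≤ b i) (hb1 : ∃ i, 0 < b i)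
    {s t : ℝ} (hs : 0 < s) (ht : 0 < t) :
    (s • G.lapMatrix ℝ + t • Matrix.diagonal b).PosDef := by
  have hL := G.posSemidef_lapMatrix ℝ
  have hB : (Matrix.diagonal b).PosSemidef := Matrix.PosSemidef.diagonal hb
  refine Matrix.PosDef.of_dotProduct_mulVec_pos
    ((hL.smul hs.le).add (hB.smul ht.le)).isHermitian fun x hx => ?_
  have h1 := hL.dotProduct_mulVec_nonneg x
  have h2 := hB.dotProduct_mulVec_nonneg x
  simp only [star_trivial] at h1 h2 ⊢
  rw [Matrix.add_mulVec, dotProduct_add, Matrix.smul_mulVec, Matrix.smul_mulVec,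
    dotProduct_smul, dotProduct_smul, smul_eq_mul, smul_eq_mul]
  by_contra! hle
  have h1' : x ⬝ᵥ G.lapMatrix ℝ *ᵥ x = 0 := by nlinarith [mul_nonneg hs.le h1, mul_nonneg ht.le h2]
  have h2' : x ⬝ᵥ Matrix.diagonal b *ᵥ x = 0 := by
    nlinarith [mul_nonneg hs.le h1, mul_nonneg ht.le h2]
  have hconst : ∀ i j, x i = x j := fun i j =>
    (G.lapMatrix_toLinearMap₂'_apply'_eq_zero_iff_forall_reachable x).1
      (by rw [Matrix.toLinearMap₂'_apply']; exact h1') i j (hG.preconnected i j)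
  obtain ⟨k, hk⟩ := hb1
  have hterm : ∀ i ∈ Finset.univ, 0 ≤ x i * (b i * x i) := fun i _ => by
    nlinarith [mul_nonneg (hb i) (mul_self_nonneg (x i))]
  have hsum : ∑ i, x i * (b i * x i) = 0 := by
    simpa [dotProduct, Matrix.mulVec_diagonal] using h2'
  have hxk : x k = 0 := by
    simpa [hk.ne'] using (Finset.sum_eq_zero_iff_of_nonneg hterm).1 hsum k (Finset.mem_univ k)
  exact hx (funext fun i => (hconst i k).trans hxk)

/-- The quadratic form of a Kronecker product with a diagonal right factor splits over slices. -/
theorem dotProduct_kronecker_diagonal_mulVec {n m : ℕ} (A : Matrix (Fin n) (Fin n) ℝ)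
    (c : Fin m → ℝ) (x : Fin n × Fin m → ℝ) :
    x ⬝ᵥ (A ⊗ₖ Matrix.diagonal c) *ᵥ x =
      ∑ j, c j * ((fun i => x (i, j)) ⬝ᵥ A *ᵥ (fun i => x (i, j))) := by
  simp only [dotProduct, Matrix.mulVec, Fintype.sum_prod_type, Matrix.kronecker_apply,
    Matrix.diagonal_apply, mul_ite, ite_mul, mul_zero, zero_mul, Finset.sum_ite_eq,
    Finset.mem_univ, if_true, Finset.mul_sum]
  rw [Finset.sum_comm]
  exact Finset.sum_congr rfl fun j _ => Finset.sum_congr rfl fun i _ =>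
    Finset.sum_congr rfl fun k _ => by ring

/-- For a connected undirected graph `G` with Laplacian `L`, a diagonal
positive semi-definite matrix `B = diagonal b` with at least one positive diagonal entry,
and positive definite diagonal matrices `C₁ = diagonal c₁`, `C₂ = diagonal c₂`, the matrix
`L ⊗ C₁ + B ⊗ C₂` is positive definite. -/
theorem lapKronecker_add_diagKronecker_posDef (n m : ℕ) (G : SimpleGraph (Fin n))
    [DecidableRel G.Adj] (hG : G.Connected)
    (b : Fin n → ℝ) (hb : ∀ i, 0 ≤ b i) (hb1 : ∃ i, 0 < b i)
    (c₁ c₂ : Fin m → ℝ) (hc₁ : ∀ j, 0 < c₁ j) (hc₂ : ∀ j, 0 < c₂ j) :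
    (G.lapMatrix ℝ ⊗ₖ Matrix.diagonal c₁
      + Matrix.diagonal b ⊗ₖ Matrix.diagonal c₂).PosDef := by
  have hherm := (((G.posSemidef_lapMatrix ℝ).kronecker
    (Matrix.PosSemidef.diagonal fun j => (hc₁ j).le)).add
      ((Matrix.PosSemidef.diagonal hb).kronecker
        (Matrix.PosSemidef.diagonal fun j => (hc₂ j).le))).isHermitian
  refine Matrix.PosDef.of_dotProduct_mulVec_pos hherm fun x hx => ?_
  have hpos := fun j => smul_lap_add_smul_diagonal_posDef G hG b hb hb1 (hc₁ j) (hc₂ j)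
  have hform : star x ⬝ᵥ (G.lapMatrix ℝ ⊗ₖ Matrix.diagonal c₁
      + Matrix.diagonal b ⊗ₖ Matrix.diagonal c₂) *ᵥ x =
      ∑ j, star (fun i => x (i, j)) ⬝ᵥ
        (c₁ j • G.lapMatrix ℝ + c₂ j • Matrix.diagonal b) *ᵥ (fun i => x (i, j)) := by
    simp only [star_trivial, Matrix.add_mulVec, dotProduct_add,
      dotProduct_kronecker_diagonal_mulVec, Matrix.smul_mulVec, dotProduct_smul, smul_eq_mul,
      Finset.sum_add_distrib]
  rw [hform]
  obtain ⟨⟨i₀, j₀⟩, hne⟩ := Function.ne_iff.1 hx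
  exact Finset.sum_pos' (fun j _ => (hpos j).posSemidef.dotProduct_mulVec_nonneg _)
    ⟨j₀, Finset.mem_univ _, (hpos j₀).dotProduct_mulVec_pos fun h => hne (congrFun h i₀)⟩
end

section
/- Let G be a connected undirected graph on n vertices with Laplacian matrix L, and let κ_p, κ_v, c_p, c_v ∈ ℝ^{3×3} be positive definite diagonal matrices. Let ê_p, ê_v : [0,∞) → ℝ^{3n} be differentiable functions satisfying the cooperative-filter error dynamics ê_p'(t) = ê_v(t) and ê_v'(t) = -(I_n ⊗ κ_p + L ⊗ c_p) ê_p(t) - (I_n ⊗ κ_v + L ⊗ c_v) ê_v(t) for all t ≥ 0. Then the error converges to zero exponentially: there exist constants M > 0 and α > 0, depending only on n, L, κ_p, κ_v, c_p, c_v, such that ‖ê_p(t)‖₂ + ‖ê_v(t)‖₂ ≤ M e^{-αt} (‖ê_p(0)‖₂ + ‖ê_v(0)‖₂) for all t ≥ 0. -/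
/-!
The error dynamics have the form `x' = v`, `v' = -P x - Q v` with `P = I ⊗ κ_p + L ⊗ c_p` and
`Q = I ⊗ κ_v + L ⊗ c_v`. Both matrices are symmetric, and since `L` is positive semidefinite their
quadratic forms are bounded below by positive multiples `p`, `q` of `|x|²` (`gain_lower`). For such
a system, with `ε = q / 2`, the Lyapunov function

  `V = |v|² + ⟨x, P x⟩ + ε (2 ⟨x, v⟩ + ⟨x, Q x⟩)`

has all cross terms cancelling in its derivative: `V' = -2 ⟨v, Q v⟩ + 2 ε |v|² - 2 ε ⟨x, P x⟩`,
which is at most `-c (|x|² + |v|²)`. As `V` is also comparable to `|x|² + |v|²` from both sides, it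
decays exponentially (`exp_decay_of_hasDerivAt_le`), and so do the errors (`second_order_decay`).
-/


open Matrix Kronecker

/-- The Euclidean (ℓ²) norm of a finitely-indexed real vector. -/
noncomputable def norm2 {ι : Type*} [Fintype ι] (v : ι → ℝ) : ℝ :=
  Real.sqrt (∑ i, v i ^ 2)

theorem norm2_sq {ι : Type*} [Fintype ι] (v : ι → ℝ) : norm2 v ^ 2 = v ⬝ᵥ v := by
  rw [norm2, Real.sq_sqrt (Finset.sum_nonneg fun i _ => sq_nonneg (v i))]
  simp [dotProduct, sq]

theorem norm2_nonneg {ι : Type*} [Fintype ι] (v : ι → ℝ) : 0 ≤ norm2 v := Real.sqrt_nonneg _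

theorem dotProduct_self_nonneg_real {ι : Type*} [Fintype ι] (v : ι → ℝ) : 0 ≤ v ⬝ᵥ v := by
  rw [← norm2_sq]
  positivity

theorem hasDerivAt_dotProduct {ι : Type*} [Fintype ι] {f g : ℝ → ι → ℝ} {f' g' : ι → ℝ} {t : ℝ}
    (hf : HasDerivAt f f' t) (hg : HasDerivAt g g' t) :
    HasDerivAt (fun s => f s ⬝ᵥ g s) (f' ⬝ᵥ g t + f t ⬝ᵥ g') t := by
  simp only [dotProduct, ← Finset.sum_add_distrib]
  exact HasDerivAt.fun_sum fun i _ => (hasDerivAt_pi.1 hf i).mul (hasDerivAt_pi.1 hg i)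

theorem hasDerivAt_mulVec {ι : Type*} [Fintype ι] (A : Matrix ι ι ℝ) {f : ℝ → ι → ℝ} {f' : ι → ℝ}
    {t : ℝ} (hf : HasDerivAt f f' t) : HasDerivAt (fun s => A *ᵥ f s) (A *ᵥ f') t := by
  refine hasDerivAt_pi.2 fun i => ?_
  simpa [mulVec] using hasDerivAt_dotProduct (hasDerivAt_const t (A i)) hf

theorem IsSymm.dotProduct_mulVec_comm {ι : Type*} [Fintype ι] {A : Matrix ι ι ℝ} (hA : A.IsSymm)
    (x y : ι → ℝ) : x ⬝ᵥ A *ᵥ y = y ⬝ᵥ A *ᵥ x := by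
  rw [dotProduct_mulVec, ← mulVec_transpose, hA.eq, dotProduct_comm]

theorem exists_quadForm_le {ι : Type*} [Fintype ι] (A : Matrix ι ι ℝ) :
    ∃ K : ℝ, 0 ≤ K ∧ ∀ x : ι → ℝ, x ⬝ᵥ A *ᵥ x ≤ K * (x ⬝ᵥ x) := by
  refine ⟨∑ i, ∑ j, |A i j|, by positivity, fun x => ?_⟩
  have hle : ∀ i, x i ^ 2 ≤ x ⬝ᵥ x := fun i => by
    rw [sq]
    exact Finset.single_le_sum (f := fun i => x i * x i) (fun j _ => mul_self_nonneg _)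
      (Finset.mem_univ i)
  have hexpand : x ⬝ᵥ A *ᵥ x = ∑ i, ∑ j, x i * (A i j * x j) := by
    simp only [dotProduct, mulVec, Finset.mul_sum]
  rw [hexpand, Finset.sum_mul]
  refine Finset.sum_le_sum fun i _ => ?_
  rw [Finset.sum_mul]
  refine Finset.sum_le_sum fun j _ => ?_
  have hprod : |x i * x j| ≤ x ⬝ᵥ x := by
    rw [abs_le]
    constructor <;> nlinarith [hle i, hle j, sq_nonneg (x i + x j), sq_nonneg (x i - x j)]
  calc x i * (A i j * x j) = A i j * (x i * x j) := by ring
    _ ≤ |A i j * (x i * x j)| := le_abs_self _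
    _ = |A i j| * |x i * x j| := abs_mul _ _
    _ ≤ |A i j| * (x ⬝ᵥ x) := by gcongr

/-- Grönwall's inequality on `[0, ∞)` in the form `V' ≤ -β V → V t ≤ e^{-β t} V 0`. -/
theorem exp_decay_of_hasDerivAt_le {V V' : ℝ → ℝ} {β : ℝ}
    (hV : ∀ t ≥ (0 : ℝ), HasDerivAt V (V' t) t) (hle : ∀ t ≥ (0 : ℝ), V' t ≤ -β * V t) :
    ∀ t ≥ (0 : ℝ), V t ≤ Real.exp (-β * t) * V 0 := by
  have hW : ∀ t ≥ (0 : ℝ), HasDerivAt (fun s => Real.exp (β * s) * V s)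
      (Real.exp (β * t) * β * V t + Real.exp (β * t) * V' t) t := fun t ht => by
    have h := ((hasDerivAt_id t).const_mul β).exp
    simp only [id, mul_one] at h
    exact h.mul (hV t ht)
  have hanti : AntitoneOn (fun s => Real.exp (β * s) * V s) (Set.Ici 0) := by
    refine antitoneOn_of_deriv_nonpos (convex_Ici 0)
      (fun t ht => (hW t ht).continuousAt.continuousWithinAt) ?_ ?_
    · intro t ht
      rw [interior_Ici] at ht
      exact (hW t (le_of_lt ht)).differentiableAt.differentiableWithinAt
    · intro t ht
      rw [interior_Ici] at ht
      rw [(hW t (le_of_lt ht)).deriv]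
      nlinarith [hle t (le_of_lt ht), Real.exp_pos (β * t)]
  intro t ht
  have h := hanti (Set.mem_Ici.2 le_rfl) (Set.mem_Ici.2 ht) ht
  simp only [mul_zero, Real.exp_zero, one_mul] at h
  calc V t = Real.exp (-β * t) * (Real.exp (β * t) * V t) := by
        rw [← mul_assoc, ← Real.exp_add]
        simp
    _ ≤ Real.exp (-β * t) * V 0 := by gcongr

/-- A damped second-order linear system `x' = v`, `v' = -P x - Q v` with symmetric stiffness `P` and
damping `Q`, both coercive, is exponentially stable with constants depending only on `P` and `Q`. -/
theorem second_order_decay {ι : Type*} [Fintype ι] (P Q : Matrix ι ι ℝ)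
    (hP : P.IsSymm) (hQ : Q.IsSymm) {p q : ℝ} (hp : 0 < p) (hq : 0 < q)
    (hPl : ∀ x, p * (x ⬝ᵥ x) ≤ x ⬝ᵥ P *ᵥ x) (hQl : ∀ x, q * (x ⬝ᵥ x) ≤ x ⬝ᵥ Q *ᵥ x) :
    ∃ M > (0 : ℝ), ∃ α > (0 : ℝ), ∀ ep ev : ℝ → ι → ℝ,
      (∀ t ≥ (0 : ℝ), HasDerivAt ep (ev t) t) →
      (∀ t ≥ (0 : ℝ), HasDerivAt ev (-(P *ᵥ ep t) - Q *ᵥ ev t) t) →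
      ∀ t ≥ (0 : ℝ), norm2 (ep t) + norm2 (ev t) ≤
        M * Real.exp (-α * t) * (norm2 (ep 0) + norm2 (ev 0)) := by
  obtain ⟨KP, hKP, hPu⟩ := exists_quadForm_le P
  obtain ⟨KQ, hKQ, hQu⟩ := exists_quadForm_le Q
  -- `a (|x|² + |v|²) ≤ V ≤ C (|x|² + |v|²)` and `V' ≤ -c (|x|² + |v|²)`.
  obtain ⟨a, ha, ha1, ha2⟩ : ∃ a : ℝ, 0 < a ∧ a ≤ 1 / 2 ∧ a ≤ p :=
    ⟨min (1 / 2) p, by positivity, min_le_left _ _, min_le_right _ _⟩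
  obtain ⟨c, hc, hc1, hc2⟩ : ∃ c : ℝ, 0 < c ∧ c ≤ q ∧ c ≤ q * p :=
    ⟨min q (q * p), by positivity, min_le_left _ _, min_le_right _ _⟩
  obtain ⟨C, hCdef⟩ : ∃ C : ℝ, C = 1 + KP + q / 2 * (1 + KQ) := ⟨_, rfl⟩
  have hC : 0 < C := by
    rw [hCdef]
    positivity
  refine ⟨Real.sqrt (2 * C / a), by positivity, c / C / 2, by positivity, ?_⟩
  intro ep ev hep hev t ht
  let V : ℝ → ℝ := fun s => ev s ⬝ᵥ ev s + ep s ⬝ᵥ P *ᵥ ep s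
    + q / 2 * (2 * (ep s ⬝ᵥ ev s) + ep s ⬝ᵥ Q *ᵥ ep s)
  let V' : ℝ → ℝ := fun s => -2 * (ev s ⬝ᵥ Q *ᵥ ev s) + q * (ev s ⬝ᵥ ev s)
    - q * (ep s ⬝ᵥ P *ᵥ ep s)
  have hV : ∀ s ≥ (0 : ℝ), HasDerivAt V (V' s) s := fun s hs => by
    have hx := hep s hs
    have hv := hev s hs
    have h := ((hasDerivAt_dotProduct hv hv).add
      (hasDerivAt_dotProduct hx (hasDerivAt_mulVec P hx))).add
      ((((hasDerivAt_dotProduct hx hv).const_mul 2).add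
        (hasDerivAt_dotProduct hx (hasDerivAt_mulVec Q hx))).const_mul (q / 2))
    refine h.congr_deriv ?_
    simp only [V', sub_dotProduct, dotProduct_sub, neg_dotProduct, dotProduct_neg]
    rw [dotProduct_comm (P *ᵥ ep s) (ev s), dotProduct_comm (Q *ᵥ ev s) (ev s),
      IsSymm.dotProduct_mulVec_comm hP (ep s) (ev s),
      IsSymm.dotProduct_mulVec_comm hQ (ep s) (ev s)]
    ring
  have hcross : ∀ r : ℝ, ∀ x v : ι → ℝ, 0 ≤ v ⬝ᵥ v + 2 * r * (x ⬝ᵥ v) + r ^ 2 * (x ⬝ᵥ x) :=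
    fun r x v => by
      have h := dotProduct_self_nonneg_real (v + r • x)
      simp only [add_dotProduct, dotProduct_add, smul_dotProduct, dotProduct_smul,
        smul_eq_mul] at h
      rw [dotProduct_comm v x] at h
      linarith
  have hupper : ∀ s, V s ≤ C * (ep s ⬝ᵥ ep s + ev s ⬝ᵥ ev s) := fun s => by
    have h1 := hPu (ep s)
    have h2 := mul_le_mul_of_nonneg_left (hQu (ep s)) hq.le
    have h3 := mul_nonneg hq.le (hcross (-1) (ep s) (ev s))
    have hX := dotProduct_self_nonneg_real (ep s)
    have hY := dotProduct_self_nonneg_real (ev s)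
    have h4 := mul_nonneg hKP hY
    have h5 := mul_nonneg (mul_nonneg hq.le hKQ) hY
    simp only [V, hCdef]
    linarith
  have hlower : ∀ s, a * (ep s ⬝ᵥ ep s + ev s ⬝ᵥ ev s) ≤ V s := fun s => by
    have h1 := hPl (ep s)
    have h2 := mul_le_mul_of_nonneg_left (hQl (ep s)) hq.le
    -- Completing the square `|v + q x|²` absorbs the cross term `q ⟨x, v⟩`.
    have h3 := hcross q (ep s) (ev s)
    have h4 := mul_le_mul_of_nonneg_right ha2 (dotProduct_self_nonneg_real (ep s))
    have h5 := mul_le_mul_of_nonneg_right ha1 (dotProduct_self_nonneg_real (ev s))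
    simp only [V]
    linarith
  have hdecay : ∀ s ≥ (0 : ℝ), V' s ≤ -(c / C) * V s := fun s _ => by
    have h1 := mul_le_mul_of_nonneg_left (hPl (ep s)) hq.le
    have h2 := hQl (ev s)
    have h3 := mul_le_mul_of_nonneg_right hc2 (dotProduct_self_nonneg_real (ep s))
    have h4 := mul_le_mul_of_nonneg_right hc1 (dotProduct_self_nonneg_real (ev s))
    have h5 : c / C * V s ≤ c * (ep s ⬝ᵥ ep s + ev s ⬝ᵥ ev s) := by
      calc c / C * V s ≤ c / C * (C * (ep s ⬝ᵥ ep s + ev s ⬝ᵥ ev s)) := by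
            gcongr
            exact hupper s
        _ = _ := by field_simp
    simp only [V'] at *
    linarith
  have hfin := exp_decay_of_hasDerivAt_le hV hdecay t ht
  have hl := hlower t
  have hu := hupper 0
  simp only [← norm2_sq] at hl hu
  have hx0 := norm2_nonneg (ep 0)
  have hv0 := norm2_nonneg (ev 0)
  refine le_of_abs_le (abs_le_of_sq_le_sq ?_ (by positivity))
  have hexp : Real.exp (-(c / C / 2) * t) ^ 2 = Real.exp (-(c / C) * t) := by
    rw [← Real.exp_nat_mul]
    congr 1
    push_cast
    ring
  rw [mul_pow, mul_pow, Real.sq_sqrt (by positivity), hexp]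
  calc (norm2 (ep t) + norm2 (ev t)) ^ 2
      ≤ 2 / a * (a * (norm2 (ep t) ^ 2 + norm2 (ev t) ^ 2)) := by
        field_simp
        nlinarith [sq_nonneg (norm2 (ep t) - norm2 (ev t))]
    _ ≤ 2 / a * (Real.exp (-(c / C) * t) * (C * (norm2 (ep 0) ^ 2 + norm2 (ev 0) ^ 2))) := by
        refine mul_le_mul_of_nonneg_left (hl.trans (hfin.trans ?_)) (by positivity)
        exact mul_le_mul_of_nonneg_left hu (Real.exp_pos _).le
    _ ≤ 2 / a * (Real.exp (-(c / C) * t) * (C * (norm2 (ep 0) + norm2 (ev 0)) ^ 2)) := by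
        gcongr
        nlinarith [mul_nonneg hx0 hv0]
    _ = 2 * C / a * Real.exp (-(c / C) * t) * (norm2 (ep 0) + norm2 (ev 0)) ^ 2 := by ring

theorem gain_isSymm {n : ℕ} (G : SimpleGraph (Fin n)) [DecidableRel G.Adj] (κ c : Fin 3 → ℝ) :
    ((1 : Matrix (Fin n) (Fin n) ℝ) ⊗ₖ Matrix.diagonal κ
      + G.lapMatrix ℝ ⊗ₖ Matrix.diagonal c).IsSymm := by
  refine IsSymm.add ?_ ?_
  · rw [IsSymm, ← kroneckerMap_transpose, transpose_one, diagonal_transpose]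
  · rw [IsSymm, ← kroneckerMap_transpose, (G.isSymm_lapMatrix (R := ℝ)).eq, diagonal_transpose]

/-- The term `L ⊗ c` only helps, since `L` is positive semidefinite; coercivity comes from
`I ⊗ κ` alone. -/
theorem gain_lower {n : ℕ} (G : SimpleGraph (Fin n)) [DecidableRel G.Adj] (κ c : Fin 3 → ℝ)
    (hκ : ∀ i, 0 < κ i) (hc : ∀ i, 0 < c i) :
    ∃ k > (0 : ℝ), ∀ x, k * (x ⬝ᵥ x) ≤ x ⬝ᵥ ((1 : Matrix (Fin n) (Fin n) ℝ) ⊗ₖ Matrix.diagonal κ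
      + G.lapMatrix ℝ ⊗ₖ Matrix.diagonal c) *ᵥ x := by
  obtain ⟨i₀, hi₀⟩ := Finite.exists_min κ
  refine ⟨κ i₀, hκ i₀, fun x => ?_⟩
  have hL := ((G.posSemidef_lapMatrix ℝ).kronecker
    (PosSemidef.diagonal (fun i => (hc i).le))).dotProduct_mulVec_nonneg x
  rw [star_trivial] at hL
  rw [add_mulVec, dotProduct_add]
  refine le_add_of_le_of_nonneg ?_ hL
  rw [← diagonal_one, diagonal_kronecker_diagonal]
  simp only [dotProduct, mulVec_diagonal, Finset.mul_sum]
  refine Finset.sum_le_sum fun i _ => ?_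
  nlinarith [mul_le_mul_of_nonneg_right (hi₀ i.2) (mul_self_nonneg (x i))]

/-- The cooperative-filter error dynamics
`ê_p' = ê_v`, `ê_v' = -(I_n ⊗ κ_p + L ⊗ c_p) ê_p - (I_n ⊗ κ_v + L ⊗ c_v) ê_v`
over a connected graph, with positive definite diagonal gain matrices, converge to zero
exponentially, with constants `M, α` depending only on `n, L` and the gains. -/
theorem coopFilter_exp_convergence (n : ℕ) (G : SimpleGraph (Fin n))
    [DecidableRel G.Adj] (hG : G.Connected)
    (κp κv cp cv : Fin 3 → ℝ)
    (hκp : ∀ i, 0 < κp i) (hκv : ∀ i, 0 < κv i)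
    (hcp : ∀ i, 0 < cp i) (hcv : ∀ i, 0 < cv i) :
    ∃ M > (0:ℝ), ∃ α > (0:ℝ), ∀ ep ev : ℝ → (Fin n × Fin 3) → ℝ,
      (∀ t ≥ (0:ℝ), HasDerivAt ep (ev t) t) →
      (∀ t ≥ (0:ℝ), HasDerivAt ev
        (-(((1 : Matrix (Fin n) (Fin n) ℝ) ⊗ₖ Matrix.diagonal κp
              + G.lapMatrix ℝ ⊗ₖ Matrix.diagonal cp).mulVec (ep t))
          - ((1 : Matrix (Fin n) (Fin n) ℝ) ⊗ₖ Matrix.diagonal κv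
              + G.lapMatrix ℝ ⊗ₖ Matrix.diagonal cv).mulVec (ev t)) t) →
      ∀ t ≥ (0:ℝ),
        norm2 (ep t) + norm2 (ev t) ≤
          M * Real.exp (-α * t) * (norm2 (ep 0) + norm2 (ev 0)) := by
  obtain ⟨p, hp, hPl⟩ := gain_lower G κp cp hκp hcp
  obtain ⟨q, hq, hQl⟩ := gain_lower G κv cv hκv hcv
  exact second_order_decay _ _ (gain_isSymm G κp cp) (gain_isSymm G κv cv) hp hq hPl hQl
end
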